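/- (Simultaneous recovery under a mean-separation bound.) Fix d ≥ 1, means μ_1,…,μ_K ∈ ℝ^d, standard deviations σ_1,…,σ_K > 0 with σ_max = max_m σ_m, and weights w_1,…,w_K > 0 summing to 1 with w_min = min_m w_m. Let θ = 2d and c_d = F(2d, d), i.e., the probability that a chi-squared random variable with d degrees of freedom is at most 4d². Suppose min_{1 ≤ m < m′ ≤ K} ‖μ_m − μ_{m′}‖ > 16·d·σ_max/(c_d·w_min). For each n let a_1,…,a_n be i.i.d. samples from the mixture Σ_{k=1}^K w_k·N(μ_k, σ_k²·I_d) and let V_m = {i : ‖a_i − μ_m‖ ≤ 2d·σ_m}. Then there exists a choice of λ = λ(n) > 0 and constants c > 0, C such that for every n, with probability at least 1 − C·e^{−c·n}, the minimizer x* of the sum-of-norms clustering objective with parameter λ(n) satisfies: for each m, x_i* = x_{i′}* for all i, i′ ∈ V_m; and for each m ≠ m′ and all i ∈ V_m, i′ ∈ V_{m′}, x_i* ≠ x_{i′}*. -/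

import Mathlib

open MeasureTheory ProbabilityTheory Finset

/-- The sum-of-norms clustering objective. -/
noncomputable def sonObjective {d n : ℕ} (a : Fin n → EuclideanSpace ℝ (Fin d)) (lam : ℝ)
    (x : Fin n → EuclideanSpace ℝ (Fin d)) : ℝ :=
  (1 / 2) * ∑ i, ‖x i - a i‖ ^ 2 + lam * ∑ i, ∑ j, if i < j then ‖x i - x j‖ else 0

/-- The spherical Gaussian `N(μ, σ²·I_d)` on `ℝ^d`. -/
noncomputable def sphericalGaussian (d : ℕ) (μ : EuclideanSpace ℝ (Fin d)) (σ : ℝ) :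
    Measure (EuclideanSpace ℝ (Fin d)) :=
  (Measure.pi fun i : Fin d => gaussianReal (μ i) (Real.toNNReal (σ ^ 2))).map
    (MeasurableEquiv.toLp 2 (Fin d → ℝ))

/-- The mixture of Gaussians `Σ_m w_m · N(μ_m, σ_m²·I_d)`. -/
noncomputable def gaussianMixture (d K : ℕ) (μ : Fin K → EuclideanSpace ℝ (Fin d))
    (σ : Fin K → ℝ) (w : Fin K → ℝ) : Measure (EuclideanSpace ℝ (Fin d)) :=
  ∑ m, ENNReal.ofReal (w m) • sphericalGaussian d (μ m) (σ m)

/-- The chi-squared distribution with `d` degrees of freedom. -/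
noncomputable def chiSquaredMeasure (d : ℕ) : Measure ℝ :=
  (Measure.pi fun _ : Fin d => gaussianReal 0 1).map (fun y => ∑ i, (y i) ^ 2)

/-- `F(θ, d)`: the probability that a chi-squared random variable with `d` degrees of
freedom is at most `θ²`. -/
noncomputable def chiSquaredCDF (θ : ℝ) (d : ℕ) : ℝ :=
  (chiSquaredMeasure d (Set.Iic (θ ^ 2))).toReal

/-!
First-order optimality of a minimizer `x*` is tested at two perturbations. Moving a single `x_k*` to
`a_k` gives `‖x_k* - a_k‖ ≤ λn`, so points with `‖a_i - a_j‖ > 2λn` are not merged. Moving all of a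
set `V` to its mean gives
`∑ ‖x_i* - x_j*‖² ≤ ∑ (‖a_i - a_j‖ - λ|V|) ‖x_i* - x_j*‖` over `i, j ∈ V`,
so `V` is merged as soon as its diameter is at most `λ|V|`. Let `R = θ σ_max` and
`p = F(θ, d) w_min`, a lower bound for the mixture measure of every ball. By Hoeffding's inequality,
outside an event of exponentially small probability each ball contains more than `2pn/3` of the
points. Then `λ = 3R/(pn)` merges each ball, since `2R ≤ λ · 2pn/3`, and does not merge points of
different balls, since their centres are more than `8R/p ≥ 2R + 6R/p = 2R + 2λn` apart.
-/

section SumOfNorms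

open Filter Metric Topology

/-- Compare `x` with `x + t (y - x)`, divide by `t` and let `t → 0`. -/
lemma inner_sub_le_sub_of_isMinOn {F : Type*} [NormedAddCommGroup F] [InnerProductSpace ℝ F]
    {s : Set F} {g : F → ℝ} (hg : ConvexOn ℝ s g) {a x y : F} (hx : x ∈ s) (hy : y ∈ s)
    (hmin : IsMinOn (fun z => 1 / 2 * ‖z - a‖ ^ 2 + g z) s x) :
    inner ℝ (a - x) (y - x) ≤ g y - g x := by
  have first_order : ∀ t ∈ Set.Ioo (0 : ℝ) 1,
      inner ℝ (a - x) (y - x) - (g y - g x) ≤ t * (1 / 2 * ‖y - x‖ ^ 2) := by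
    rintro t ⟨ht0, ht1⟩
    have hconv : g ((1 - t) • x + t • y) ≤ (1 - t) * g x + t * g y :=
      hg.2 hx hy (by linarith) ht0.le (by ring)
    have hle : 1 / 2 * ‖x - a‖ ^ 2 + g x
        ≤ 1 / 2 * ‖(1 - t) • x + t • y - a‖ ^ 2 + g ((1 - t) • x + t • y) :=
      hmin (hg.1 hx hy (by linarith) ht0.le (by ring))
    have hnorm : ‖(1 - t) • x + t • y - a‖ ^ 2
        = t ^ 2 * ‖y - x‖ ^ 2 - 2 * t * inner ℝ (a - x) (y - x) + ‖x - a‖ ^ 2 := by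
      rw [show (1 - t) • x + t • y - a = t • (y - x) - (a - x) by module, norm_sub_sq_real,
        norm_smul, real_inner_smul_left, real_inner_comm, norm_sub_rev a x, mul_pow,
        Real.norm_eq_abs, sq_abs, mul_assoc]
    refine le_of_mul_le_mul_left ?_ ht0
    linarith
  have hlim : Tendsto (fun t : ℝ => t * (1 / 2 * ‖y - x‖ ^ 2)) (𝓝[>] 0) (𝓝 0) := by
    refine tendsto_nhdsWithin_of_tendsto_nhds ?_
    simpa using (tendsto_id (x := 𝓝 (0 : ℝ))).mul_const (1 / 2 * ‖y - x‖ ^ 2)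
  refine sub_nonpos.1 (ge_of_tendsto hlim ?_)
  filter_upwards [Ioo_mem_nhdsGT one_pos] using first_order

lemma sum_sum_ite_lt {ι : Type*} [Fintype ι] [LinearOrder ι] {g : ι → ι → ℝ}
    (hdiag : ∀ i, g i i = 0) (hsymm : ∀ i j, g i j = g j i) :
    ∑ i, ∑ j, (if i < j then g i j else 0) = 1 / 2 * ∑ i, ∑ j, g i j := by
  have hsplit : ∀ i j, g i j = (if i < j then g i j else 0) + if j < i then g j i else 0 := by
    intro i j
    rcases lt_trichotomy i j with h | rfl | h
    · simp [h, h.not_gt]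
    · simp [hdiag]
    · simp [h, h.not_gt, hsymm i j]
  have hswap := Finset.sum_comm (s := univ) (t := univ) (f := fun i j => if j < i then g j i else 0)
  have htotal := Finset.sum_congr rfl fun i (_ : i ∈ univ) =>
    Finset.sum_congr rfl fun j (_ : j ∈ univ) => hsplit i j
  simp only [Finset.sum_add_distrib] at htotal
  linarith

variable {ι E : Type*} [NormedAddCommGroup E]

lemma card_mul_norm_sub_le_sum_norm_sub [NormedSpace ℝ E] {s : Finset ι} {x : ι → E} {b : E}
    (hb : (#s : ℝ) • b = ∑ i ∈ s, x i) (z : E) :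
    #s * ‖b - z‖ ≤ ∑ i ∈ s, ‖x i - z‖ := by
  have hmean : (#s : ℝ) • (b - z) = ∑ i ∈ s, (x i - z) := by
    rw [Finset.sum_sub_distrib, smul_sub, hb, Finset.sum_const, ← Nat.cast_smul_eq_nsmul ℝ]
  calc #s * ‖b - z‖ = ‖∑ i ∈ s, (x i - z)‖ := by
        rw [← hmean, norm_smul_of_nonneg (Nat.cast_nonneg _)]
    _ ≤ ∑ i ∈ s, ‖x i - z‖ := norm_sum_le _ _

lemma sum_sum_inner_sub_sub [InnerProductSpace ℝ E] {s : Finset ι} {x : ι → E} {b : E}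
    (hb : (#s : ℝ) • b = ∑ i ∈ s, x i) (u : ι → E) :
    ∑ i ∈ s, ∑ j ∈ s, inner ℝ (u i - u j) (x i - x j)
      = 2 * #s * ∑ i ∈ s, inner ℝ (u i) (x i - b) := by
  have hcross : inner ℝ (∑ i ∈ s, u i) (∑ i ∈ s, x i) = #s * inner ℝ (∑ i ∈ s, u i) b := by
    rw [← hb, real_inner_smul_right]
  simp only [inner_sub_left, inner_sub_right, Finset.sum_sub_distrib, Finset.sum_const,
    nsmul_eq_mul, ← inner_sum, ← sum_inner, ← Finset.mul_sum, hcross]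
  ring

variable [Fintype ι]

/-- The sum of the distances over all ordered pairs, the fusion penalty of sum-of-norms
clustering; every unordered pair is counted twice. -/
noncomputable def pairwiseNormSum (x : ι → E) : ℝ :=
  ∑ i, ∑ j, ‖x i - x j‖

/-- The sum-of-norms clustering objective for a finite family of points of a normed space. The
factor `lam / 2` compensates for `pairwiseNormSum` ranging over ordered pairs. -/
noncomputable def sumOfNorms (a : ι → E) (lam : ℝ) (x : ι → E) : ℝ :=
  1 / 2 * ∑ i, ‖x i - a i‖ ^ 2 + lam / 2 * pairwiseNormSum x

lemma sonObjective_eq_sumOfNorms {d n : ℕ} (a : Fin n → EuclideanSpace ℝ (Fin d)) (lam : ℝ) :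
    sonObjective a lam = sumOfNorms a lam := by
  ext x
  rw [sonObjective, sumOfNorms, pairwiseNormSum,
    sum_sum_ite_lt (fun i => by simp) (fun i j => norm_sub_rev _ _)]
  ring

lemma pairwiseNormSum_le_add (x y : ι → E) :
    pairwiseNormSum y ≤ pairwiseNormSum x + 2 * Fintype.card ι * ∑ i, ‖y i - x i‖ := by
  calc pairwiseNormSum y
      ≤ ∑ i, ∑ j, (‖x i - x j‖ + ‖y i - x i‖ + ‖y j - x j‖) := by
        refine Finset.sum_le_sum fun i _ => Finset.sum_le_sum fun j _ => ?_
        rw [show y i - y j = x i - x j + (y i - x i) - (y j - x j) by abel]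
        exact (norm_sub_le _ _).trans (add_le_add_left (norm_add_le _ _) _)
    _ = pairwiseNormSum x + 2 * Fintype.card ι * ∑ i, ‖y i - x i‖ := by
        simp only [pairwiseNormSum, Finset.sum_add_distrib, Finset.sum_const, Finset.card_univ,
          nsmul_eq_mul, ← Finset.mul_sum]
        ring

lemma sum_sum_eq_add_compl [DecidableEq ι] {g : ι → ι → ℝ} (hsymm : ∀ i j, g i j = g j i)
    (s : Finset ι) :
    ∑ i, ∑ j, g i j = ∑ i ∈ s, ∑ j ∈ s, g i j + 2 * ∑ j ∈ sᶜ, ∑ i ∈ s, g i j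
      + ∑ i ∈ sᶜ, ∑ j ∈ sᶜ, g i j := by
  have hcross : ∑ i ∈ sᶜ, ∑ j ∈ s, g i j = ∑ j ∈ sᶜ, ∑ i ∈ s, g i j :=
    Finset.sum_congr rfl fun i _ => Finset.sum_congr rfl fun j _ => hsymm i j
  have hcomm : ∑ i ∈ s, ∑ j ∈ sᶜ, g i j = ∑ j ∈ sᶜ, ∑ i ∈ s, g i j := Finset.sum_comm
  simp only [← Finset.sum_add_sum_compl s, Finset.sum_add_distrib]
  linarith

section NormedSpace

variable [NormedSpace ℝ E]

lemma convexOn_pairwiseNormSum : ConvexOn ℝ Set.univ (pairwiseNormSum : (ι → E) → ℝ) := by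
  refine ⟨convex_univ, fun x _ y _ α β hα hβ _ => ?_⟩
  simp only [pairwiseNormSum, smul_eq_mul, Finset.mul_sum, ← Finset.sum_add_distrib]
  refine Finset.sum_le_sum fun i _ => Finset.sum_le_sum fun j _ => ?_
  calc ‖(α • x + β • y) i - (α • x + β • y) j‖
      = ‖α • (x i - x j) + β • (y i - y j)‖ := by
        simp only [Pi.add_apply, Pi.smul_apply]
        congr 1
        module
    _ ≤ ‖α • (x i - x j)‖ + ‖β • (y i - y j)‖ := norm_add_le _ _
    _ = α * ‖x i - x j‖ + β * ‖y i - y j‖ := by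
        rw [norm_smul_of_nonneg hα, norm_smul_of_nonneg hβ]

lemma pairwiseNormSum_piecewise_mean_add_le [DecidableEq ι] {s : Finset ι} {x : ι → E} {b : E}
    (hb : (#s : ℝ) • b = ∑ i ∈ s, x i) :
    pairwiseNormSum (s.piecewise (fun _ => b) x) + ∑ i ∈ s, ∑ j ∈ s, ‖x i - x j‖
      ≤ pairwiseNormSum x := by
  set y := s.piecewise (fun _ => b) x
  have hys : ∀ i ∈ s, y i = b := fun i hi => s.piecewise_eq_of_mem _ _ hi
  have hyc : ∀ i ∈ sᶜ, y i = x i := fun i hi =>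
    s.piecewise_eq_of_notMem _ _ (Finset.mem_compl.1 hi)
  have inside : ∑ i ∈ s, ∑ j ∈ s, ‖y i - y j‖ = 0 :=
    Finset.sum_eq_zero fun i hi => Finset.sum_eq_zero fun j hj => by simp [hys i hi, hys j hj]
  have outside : ∑ i ∈ sᶜ, ∑ j ∈ sᶜ, ‖y i - y j‖ = ∑ i ∈ sᶜ, ∑ j ∈ sᶜ, ‖x i - x j‖ :=
    Finset.sum_congr rfl fun i hi => Finset.sum_congr rfl fun j hj => by rw [hyc i hi, hyc j hj]
  have across : ∑ j ∈ sᶜ, ∑ i ∈ s, ‖y i - y j‖ ≤ ∑ j ∈ sᶜ, ∑ i ∈ s, ‖x i - x j‖ := by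
    refine Finset.sum_le_sum fun j hj => ?_
    calc ∑ i ∈ s, ‖y i - y j‖ = ∑ _ ∈ s, ‖b - x j‖ :=
          Finset.sum_congr rfl fun i hi => by rw [hys i hi, hyc j hj]
      _ = #s * ‖b - x j‖ := by rw [Finset.sum_const, nsmul_eq_mul]
      _ ≤ ∑ i ∈ s, ‖x i - x j‖ := card_mul_norm_sub_le_sum_norm_sub hb _
  rw [pairwiseNormSum, pairwiseNormSum, sum_sum_eq_add_compl (fun i j => norm_sub_rev _ _) s,
    sum_sum_eq_add_compl (g := fun i j => ‖x i - x j‖) (fun i j => norm_sub_rev _ _) s]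
  linarith

end NormedSpace

variable [InnerProductSpace ℝ E]

lemma sum_inner_le_of_isMinOn_sumOfNorms {a x : ι → E} {lam : ℝ} (hlam : 0 ≤ lam)
    (hx : IsMinOn (sumOfNorms a lam) Set.univ x) (y : ι → E) :
    ∑ i, inner ℝ (a i - x i) (y i - x i)
      ≤ lam / 2 * (pairwiseNormSum y - pairwiseNormSum x) := by
  let g : PiLp 2 (fun _ : ι => E) → ℝ := fun z => lam / 2 * pairwiseNormSum (WithLp.ofLp z)
  have hcomp : ConvexOn ℝ Set.univ (pairwiseNormSum ∘ WithLp.linearEquiv 2 ℝ (ι → E)) :=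
    (convexOn_pairwiseNormSum (ι := ι) (E := E)).comp_linearMap
      (WithLp.linearEquiv 2 ℝ (ι → E)).toLinearMap
  have hg : ConvexOn ℝ Set.univ g := hcomp.smul (by positivity)
  have hmin : IsMinOn (fun z => 1 / 2 * ‖z - WithLp.toLp 2 a‖ ^ 2 + g z) Set.univ
      (WithLp.toLp 2 x) := fun z _ => by
    simpa [sumOfNorms, g, PiLp.norm_sq_eq_of_L2] using hx (Set.mem_univ (WithLp.ofLp z))
  have h := inner_sub_le_sub_of_isMinOn hg (Set.mem_univ _) (Set.mem_univ (WithLp.toLp 2 y)) hmin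
  simpa only [PiLp.inner_apply, PiLp.sub_apply, g, mul_sub] using h

lemma norm_sub_le_of_isMinOn_sumOfNorms {a x : ι → E} {lam : ℝ} (hlam : 0 ≤ lam)
    (hx : IsMinOn (sumOfNorms a lam) Set.univ x) (k : ι) :
    ‖a k - x k‖ ≤ lam * Fintype.card ι := by
  classical
  rcases eq_or_ne (a k) (x k) with hk | hk
  · simpa [hk] using by positivity
  set y := Function.update x k (a k)
  have hdiff : ∀ i, y i - x i = if i = k then a k - x k else 0 := fun i => by
    rcases eq_or_ne i k with rfl | hi <;> simp [y, *]
  have hinner : ∑ i, inner ℝ (a i - x i) (y i - x i) = ‖a k - x k‖ ^ 2 := by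
    simp [hdiff, apply_ite (inner ℝ _)]
  have hnorm : ∑ i, ‖y i - x i‖ = ‖a k - x k‖ := by simp [hdiff, apply_ite norm]
  have hpenalty := pairwiseNormSum_le_add x y
  rw [hnorm] at hpenalty
  refine le_of_mul_le_mul_right ?_ (norm_pos_iff.2 (sub_ne_zero.2 hk))
  calc ‖a k - x k‖ * ‖a k - x k‖ = ∑ i, inner ℝ (a i - x i) (y i - x i) := by rw [hinner, sq]
    _ ≤ lam / 2 * (pairwiseNormSum y - pairwiseNormSum x) :=
        sum_inner_le_of_isMinOn_sumOfNorms hlam hx y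
    _ ≤ lam / 2 * (2 * Fintype.card ι * ‖a k - x k‖) := by gcongr; linarith
    _ = lam * Fintype.card ι * ‖a k - x k‖ := by ring

lemma ne_of_isMinOn_sumOfNorms {a x : ι → E} {lam : ℝ} (hlam : 0 ≤ lam)
    (hx : IsMinOn (sumOfNorms a lam) Set.univ x) {i j : ι}
    (hij : 2 * (lam * Fintype.card ι) < ‖a i - a j‖) : x i ≠ x j := by
  intro heq
  have htri := norm_sub_le_norm_sub_add_norm_sub (a i) (x i) (a j)
  have hi := norm_sub_le_of_isMinOn_sumOfNorms hlam hx i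
  have hj := norm_sub_le_of_isMinOn_sumOfNorms hlam hx j
  rw [heq, norm_sub_rev (x j)] at htri
  rw [heq] at hi
  linarith

/-- Optimality tested against moving all of `s` to its mean. -/
lemma sum_sum_inner_le_of_isMinOn_sumOfNorms {a x : ι → E} {lam : ℝ} (hlam : 0 ≤ lam)
    (hx : IsMinOn (sumOfNorms a lam) Set.univ x) {s : Finset ι} (hs : s.Nonempty) :
    ∑ i ∈ s, ∑ j ∈ s, inner ℝ (x i - a i - (x j - a j)) (x i - x j)
      ≤ -(lam * #s) * ∑ i ∈ s, ∑ j ∈ s, ‖x i - x j‖ := by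
  classical
  obtain ⟨b, hb⟩ : ∃ b : E, (#s : ℝ) • b = ∑ i ∈ s, x i :=
    ⟨(#s : ℝ)⁻¹ • ∑ i ∈ s, x i, smul_inv_smul₀ (by simpa using hs.ne_empty) _⟩
  set y := s.piecewise (fun _ => b) x
  have hinner : ∑ i, inner ℝ (a i - x i) (y i - x i)
      = ∑ i ∈ s, inner ℝ (x i - a i) (x i - b) := by
    have hout : ∑ i ∈ sᶜ, inner ℝ (a i - x i) (y i - x i) = 0 :=
      Finset.sum_eq_zero fun i hi => by simp [y, Finset.mem_compl.1 hi]
    rw [← Finset.sum_add_sum_compl s, hout, add_zero]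
    refine Finset.sum_congr rfl fun i hi => ?_
    rw [show y i = b from s.piecewise_eq_of_mem _ _ hi, ← inner_neg_neg, neg_sub, neg_sub]
  have hpenalty := pairwiseNormSum_piecewise_mean_add_le hb
  calc ∑ i ∈ s, ∑ j ∈ s, inner ℝ (x i - a i - (x j - a j)) (x i - x j)
      = 2 * #s * ∑ i, inner ℝ (a i - x i) (y i - x i) := by
        rw [hinner, ← sum_sum_inner_sub_sub hb (fun i => x i - a i)]
    _ ≤ 2 * #s * (lam / 2 * (pairwiseNormSum y - pairwiseNormSum x)) := by
        gcongr
        exact sum_inner_le_of_isMinOn_sumOfNorms hlam hx y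
    _ ≤ 2 * #s * (lam / 2 * -∑ i ∈ s, ∑ j ∈ s, ‖x i - x j‖) := by
        gcongr
        linarith
    _ = -(lam * #s) * ∑ i ∈ s, ∑ j ∈ s, ‖x i - x j‖ := by ring

lemma eq_of_isMinOn_sumOfNorms {a x : ι → E} {lam : ℝ} (hlam : 0 ≤ lam)
    (hx : IsMinOn (sumOfNorms a lam) Set.univ x) {s : Finset ι}
    (hs : ∀ i ∈ s, ∀ j ∈ s, ‖a i - a j‖ ≤ lam * #s) {i j : ι} (hi : i ∈ s) (hj : j ∈ s) :
    x i = x j := by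
  have hpair : ∀ i ∈ s, ∀ j ∈ s, ‖x i - x j‖ ^ 2
      ≤ inner ℝ (x i - a i - (x j - a j)) (x i - x j) + lam * #s * ‖x i - x j‖ := by
    intro i hi j hj
    rw [sub_sub_sub_comm, inner_sub_left, real_inner_self_eq_norm_sq]
    linarith [real_inner_le_norm (a i - a j) (x i - x j),
      mul_le_mul_of_nonneg_right (hs i hi j hj) (norm_nonneg (x i - x j))]
  have hsum : ∑ i ∈ s, ∑ j ∈ s, ‖x i - x j‖ ^ 2 ≤ 0 := by
    calc ∑ i ∈ s, ∑ j ∈ s, ‖x i - x j‖ ^ 2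
        ≤ ∑ i ∈ s, ∑ j ∈ s,
            (inner ℝ (x i - a i - (x j - a j)) (x i - x j) + lam * #s * ‖x i - x j‖) :=
          Finset.sum_le_sum fun i hi => Finset.sum_le_sum fun j hj => hpair i hi j hj
      _ = ∑ i ∈ s, ∑ j ∈ s, inner ℝ (x i - a i - (x j - a j)) (x i - x j)
            + lam * #s * ∑ i ∈ s, ∑ j ∈ s, ‖x i - x j‖ := by
          simp only [Finset.sum_add_distrib, Finset.mul_sum]
      _ ≤ 0 := by linarith [sum_sum_inner_le_of_isMinOn_sumOfNorms hlam hx ⟨i, hi⟩]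
  have hle : ‖x i - x j‖ ^ 2 ≤ ∑ i ∈ s, ∑ j ∈ s, ‖x i - x j‖ ^ 2 :=
    (Finset.single_le_sum (f := fun j => ‖x i - x j‖ ^ 2) (fun _ _ => by positivity) hj).trans
      (Finset.single_le_sum (f := fun i => ∑ j ∈ s, ‖x i - x j‖ ^ 2)
        (fun _ _ => by positivity) hi)
  simpa [sub_eq_zero] using (hle.trans hsum).antisymm (by positivity)

/-- Every minimizer of the sum-of-norms objective merges all data points lying in one of the balls
`closedBall (c m) (r m)` and separates data points lying in different balls. -/
def RecoversBalls {κ : Type*} (a : ι → E) (lam : ℝ) (c : κ → E) (r : κ → ℝ) : Prop :=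
  ∀ x, IsMinOn (sumOfNorms a lam) Set.univ x →
    (∀ m i i', a i ∈ closedBall (c m) (r m) → a i' ∈ closedBall (c m) (r m) → x i = x i') ∧
    ∀ m m', m ≠ m' → ∀ i i', a i ∈ closedBall (c m) (r m) → a i' ∈ closedBall (c m') (r m') →
      x i ≠ x i'

open scoped Classical in
lemma recoversBalls_of_le_mul_card {κ : Type*} {a : ι → E} {lam R : ℝ} {c : κ → E} {r : κ → ℝ}
    (hlam : 0 ≤ lam) (hr : ∀ m, r m ≤ R)
    (hcard : ∀ m, 2 * R ≤ lam * #{i | a i ∈ closedBall (c m) (r m)})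
    (hsep : ∀ m m', m ≠ m' → 2 * R + 2 * (lam * Fintype.card ι) < ‖c m - c m'‖) :
    RecoversBalls a lam c r := by
  have hball : ∀ {m i}, a i ∈ closedBall (c m) (r m) → ‖a i - c m‖ ≤ R := fun {m _} hi =>
    (mem_closedBall_iff_norm.1 hi).trans (hr m)
  refine fun x hx => ⟨fun m i i' hi hi' => ?_, fun m m' hmm' i i' hi hi' => ?_⟩
  · refine eq_of_isMinOn_sumOfNorms hlam hx (s := {i | a i ∈ closedBall (c m) (r m)})
      (fun j hj k hk => ?_) (by simpa using hi) (by simpa using hi')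
    have hj := hball (Finset.mem_filter_univ j |>.1 hj)
    have hk := hball (Finset.mem_filter_univ k |>.1 hk)
    have htri := norm_sub_le_norm_sub_add_norm_sub (a j) (c m) (a k)
    rw [norm_sub_rev (c m)] at htri
    linarith [hcard m]
  · refine ne_of_isMinOn_sumOfNorms hlam hx ?_
    have htri := norm_sub_le_norm_sub_add_norm_sub (c m) (a i) (c m')
    have htri' := norm_sub_le_norm_sub_add_norm_sub (a i) (a i') (c m')
    rw [norm_sub_rev (c m) (a i)] at htri
    linarith [hball hi, hball hi', hsep m m' hmm']

open scoped Classical in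
lemma recoversBalls_of_lt_card_mem_closedBall {κ : Type*} {a : ι → E} {p R : ℝ} {c : κ → E}
    {r : κ → ℝ} (hp : 0 < p) (hR : 0 ≤ R) (hr : ∀ m, r m ≤ R)
    (hcount : ∀ m, 2 / 3 * (p * Fintype.card ι) < #{i | a i ∈ closedBall (c m) (r m)})
    (hsep : ∀ m m', m ≠ m' → 2 * R + 6 * R / p < ‖c m - c m'‖) :
    RecoversBalls a (3 * R / (p * max (Fintype.card ι : ℝ) 1)) c r := by
  -- `N` is the number of points, raised to `1` so that the parameter stays positive without data.
  set N := max (Fintype.card ι : ℝ) 1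
  have hN : 0 < N := lt_max_of_lt_right one_pos
  refine recoversBalls_of_le_mul_card (by positivity) hr (fun m => ?_) fun m m' hmm' =>
    lt_of_le_of_lt ?_ (hsep m m' hmm')
  · have hcard : 1 ≤ Fintype.card ι := by
      have hpos : (0 : ℝ) < #{i | a i ∈ closedBall (c m) (r m)} :=
        lt_of_le_of_lt (by positivity) (hcount m)
      exact (Nat.cast_pos.1 hpos).trans_le (Finset.card_le_univ _)
    have hNcard : N = Fintype.card ι := max_eq_left (by exact_mod_cast hcard)
    calc 2 * R = 3 * R / (p * N) * (2 / 3 * (p * N)) := by field_simp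
      _ ≤ 3 * R / (p * N) * #{i | a i ∈ closedBall (c m) (r m)} := by
        gcongr
        exact hNcard ▸ (hcount m).le
  · calc 2 * R + 2 * (3 * R / (p * N) * Fintype.card ι)
        ≤ 2 * R + 2 * (3 * R / (p * N) * N) := by
          gcongr
          exact le_max_left _ _
      _ = 2 * R + 6 * R / p := by field_simp; ring

end SumOfNorms

section Probability

open Metric

open scoped Classical in
lemma measureReal_pi_card_mem_le {ι E : Type*} [Fintype ι] [MeasurableSpace E] (ν : Measure E)
    [IsProbabilityMeasure ν] {B : Set E} (hB : MeasurableSet B) {t : ℝ} (ht : 0 ≤ t) :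
    (Measure.pi fun _ : ι => ν).real {a | (#{i | a i ∈ B} : ℝ) ≤ Fintype.card ι * (ν.real B - t)}
      ≤ Real.exp (-(2 * t ^ 2) * Fintype.card ι) := by
  let X : E → ℝ := B.indicator fun _ => -1
  have hX : Measurable X := measurable_const.indicator hB
  have hmean : ∫ y, X y ∂ν = -ν.real B := by simp [X, integral_indicator hB]
  have hrange : ∀ y, X y ∈ Set.Icc (-1 : ℝ) 0 := fun y => by
    by_cases hy : y ∈ B <;> simp [X, hy]
  have hsum : ∀ a : ι → E, ∑ i, (X (a i) + ν.real B)
      = Fintype.card ι * ν.real B - #{i | a i ∈ B} := fun a => by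
    simp only [X, Set.indicator_apply, sum_add_distrib, sum_ite, sum_neg_distrib, sum_const,
      nsmul_eq_mul, mul_one, card_univ]
    ring
  have hsubG : ∀ i ∈ univ, HasSubgaussianMGF (fun a : ι → E => X (a i) + ν.real B)
      ((‖(0 : ℝ) - -1‖₊ / 2) ^ 2) (Measure.pi fun _ : ι => ν) := fun i _ => by
    have hmean_eval : ∫ a, X (a i) ∂(Measure.pi fun _ : ι => ν) = -ν.real B := by
      rw [← hmean]
      exact integral_comp_eval hX.aestronglyMeasurable
    have h := hasSubgaussianMGF_of_mem_Icc (μ := Measure.pi fun _ : ι => ν)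
      (X := fun a => X (a i)) (hX.comp (measurable_pi_apply i)).aemeasurable
      (ae_of_all _ fun a => hrange (a i))
    simpa only [hmean_eval, sub_neg_eq_add] using h
  have hindep : iIndepFun (fun i (a : ι → E) => X (a i) + ν.real B)
      (Measure.pi fun _ : ι => ν) :=
    iIndepFun_pi (X := fun _ y => X y + ν.real B) fun _ => (hX.add_const _).aemeasurable
  have hoeffding := HasSubgaussianMGF.measure_sum_ge_le_of_iIndepFun hindep hsubG
    (show 0 ≤ Fintype.card ι * t by positivity)
  convert hoeffding using 2
  · congr 1
    ext a
    rw [hsum]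
    constructor <;> intro h <;> linarith
  · simp only [neg_mul, sub_neg_eq_add, zero_add, nnnorm_one, one_div, inv_pow, sum_const,
      card_univ, nsmul_eq_mul, NNReal.coe_mul, NNReal.coe_natCast, NNReal.coe_inv, NNReal.coe_pow,
      NNReal.coe_ofNat]
    rcases eq_or_ne (Fintype.card ι : ℝ) 0 with hn | hn
    · simp [hn]
    · field_simp

open scoped Classical in
lemma one_sub_le_measureReal_pi_forall_lt_card_mem {ι κ E : Type*} [Fintype ι] [Fintype κ]
    [MeasurableSpace E] (ν : Measure E) [IsProbabilityMeasure ν] {B : κ → Set E}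
    (hB : ∀ m, MeasurableSet (B m)) {p : ℝ} (hp : 0 ≤ p) (hpB : ∀ m, p ≤ ν.real (B m)) :
    1 - Fintype.card κ * Real.exp (-(2 * (p / 3) ^ 2) * Fintype.card ι) ≤
      (Measure.pi fun _ : ι => ν).real
        {a | ∀ m, 2 / 3 * (p * Fintype.card ι) < #{i | a i ∈ B m}} := by
  set P := Measure.pi fun _ : ι => ν
  let bad : κ → Set (ι → E) := fun m => {a | #{i | a i ∈ B m} ≤ 2 / 3 * (p * Fintype.card ι)}
  have hbad : ∀ m, P.real (bad m) ≤ Real.exp (-(2 * (p / 3) ^ 2) * Fintype.card ι) := fun m => by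
    refine (measureReal_mono fun a ha => ?_).trans
      (measureReal_pi_card_mem_le ν (hB m) (t := p / 3) (by positivity))
    calc (#{i | a i ∈ B m} : ℝ) ≤ 2 / 3 * (p * Fintype.card ι) := ha
      _ = Fintype.card ι * (p - p / 3) := by ring
      _ ≤ Fintype.card ι * (ν.real (B m) - p / 3) := by gcongr; exact hpB m
  have hunion : P.real (⋃ m, bad m)
      ≤ Fintype.card κ * Real.exp (-(2 * (p / 3) ^ 2) * Fintype.card ι) := by
    calc P.real (⋃ m, bad m) ≤ ∑ m, P.real (bad m) := measureReal_iUnion_fintype_le bad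
      _ ≤ ∑ _ : κ, Real.exp (-(2 * (p / 3) ^ 2) * Fintype.card ι) :=
        Finset.sum_le_sum fun m _ => hbad m
      _ = Fintype.card κ * Real.exp (-(2 * (p / 3) ^ 2) * Fintype.card ι) := by simp
  have hcompl : (⋃ m, bad m)ᶜ = {a | ∀ m, 2 / 3 * (p * Fintype.card ι) < #{i | a i ∈ B m}} := by
    ext a
    simp [bad]
  have hcover : 1 ≤ P.real (⋃ m, bad m) + P.real (⋃ m, bad m)ᶜ := by
    simpa only [Set.union_compl_self, probReal_univ] using
      measureReal_union_le (μ := P) (⋃ m, bad m) (⋃ m, bad m)ᶜ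
  rw [hcompl] at hcover
  linarith

lemma ofReal_one_sub_le_pi_recoversBalls {ι κ E : Type*} [Fintype ι] [Fintype κ]
    [NormedAddCommGroup E] [InnerProductSpace ℝ E] [MeasurableSpace E] [OpensMeasurableSpace E]
    (ν : Measure E) [IsProbabilityMeasure ν] {p R : ℝ} {c : κ → E} {r : κ → ℝ} (hp : 0 < p)
    (hR : 0 ≤ R) (hr : ∀ m, r m ≤ R) (hball : ∀ m, p ≤ ν.real (closedBall (c m) (r m)))
    (hsep : ∀ m m', m ≠ m' → 8 * R / p < ‖c m - c m'‖) :
    ENNReal.ofReal (1 - Fintype.card κ * Real.exp (-(2 * (p / 3) ^ 2) * Fintype.card ι)) ≤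
      (Measure.pi fun _ : ι => ν)
        {a | RecoversBalls a (3 * R / (p * max (Fintype.card ι : ℝ) 1)) c r} := by
  classical
  have hsep' : ∀ m m', m ≠ m' → 2 * R + 6 * R / p < ‖c m - c m'‖ := fun m m' hmm' =>
    calc 2 * R + 6 * R / p ≤ 2 * R / p + 6 * R / p := by
          gcongr
          exact le_div_self (by positivity) hp ((hball m).trans measureReal_le_one)
      _ = 8 * R / p := by ring
      _ < ‖c m - c m'‖ := hsep m m' hmm'
  refine (ENNReal.ofReal_le_ofReal (one_sub_le_measureReal_pi_forall_lt_card_mem ν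
    (fun m => measurableSet_closedBall) hp.le hball)).trans ?_
  rw [ofReal_measureReal]
  refine measure_mono fun a ha => ?_
  exact recoversBalls_of_lt_card_mem_closedBall hp hR hr (fun m => by convert ha m) hsep'

variable {d K : ℕ}

lemma sphericalGaussian_eq_map_stdGaussian (μ : EuclideanSpace ℝ (Fin d)) (σ : ℝ) :
    sphericalGaussian d μ σ
      = (stdGaussian (EuclideanSpace ℝ (Fin d))).map fun x => σ • x + μ := by
  have hcoord : ∀ i : Fin d, gaussianReal (μ i) (Real.toNNReal (σ ^ 2))
      = (gaussianReal 0 1).map fun y => σ * y + μ i := fun i => by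
    have hcomp : (fun y => σ * y + μ i) = (fun y => y + μ i) ∘ (fun y => σ * y) := rfl
    rw [hcomp, ← Measure.map_map (by fun_prop) (by fun_prop), gaussianReal_map_const_mul,
      gaussianReal_map_add_const, mul_zero, zero_add, mul_one]
    congr 1
    ext
    simp [sq_nonneg σ]
  rw [sphericalGaussian, ← map_pi_eq_stdGaussian, Measure.map_map (by fun_prop) (by fun_prop)]
  simp only [hcoord]
  rw [← Measure.pi_map_pi (fun i => by fun_prop), Measure.map_map (by fun_prop) (by fun_prop)]
  rfl

lemma chiSquaredCDF_eq_stdGaussian_closedBall {θ : ℝ} (hθ : 0 ≤ θ) (d : ℕ) :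
    chiSquaredCDF θ d = (stdGaussian (EuclideanSpace ℝ (Fin d))).real (closedBall 0 θ) := by
  rw [chiSquaredCDF, chiSquaredMeasure, Measure.real, ← map_pi_eq_stdGaussian,
    Measure.map_apply (by fun_prop) measurableSet_Iic,
    Measure.map_apply (by fun_prop) measurableSet_closedBall]
  congr 2
  ext y
  simp [← sq_le_sq₀ (norm_nonneg _) hθ, EuclideanSpace.real_norm_sq_eq]

lemma sphericalGaussian_closedBall (μ : EuclideanSpace ℝ (Fin d)) {θ σ : ℝ} (hθ : 0 ≤ θ)
    (hσ : 0 < σ) :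
    (sphericalGaussian d μ σ).real (closedBall μ (θ * σ)) = chiSquaredCDF θ d := by
  rw [chiSquaredCDF_eq_stdGaussian_closedBall hθ, sphericalGaussian_eq_map_stdGaussian,
    map_measureReal_apply (by fun_prop) measurableSet_closedBall]
  congr 1
  ext x
  simp [norm_smul, abs_of_pos hσ, mul_comm θ, hσ]

instance isProbabilityMeasure_sphericalGaussian (μ : EuclideanSpace ℝ (Fin d)) (σ : ℝ) :
    IsProbabilityMeasure (sphericalGaussian d μ σ) :=
  Measure.isProbabilityMeasure_map (by fun_prop)

lemma chiSquaredCDF_pos {θ : ℝ} (hθ : 0 < θ) (d : ℕ) : 0 < chiSquaredCDF θ d := by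
  have : (gaussianReal 0 1).IsOpenPosMeasure :=
    (gaussianReal_absolutelyContinuous' 0 one_ne_zero).isOpenPosMeasure
  have : (stdGaussian (EuclideanSpace ℝ (Fin d))).IsOpenPosMeasure := by
    rw [← map_pi_eq_stdGaussian]
    exact (PiLp.continuous_toLp 2 _).isOpenPosMeasure_map (WithLp.toLp_surjective 2)
  rw [chiSquaredCDF_eq_stdGaussian_closedBall hθ.le]
  exact ENNReal.toReal_pos (measure_closedBall_pos _ _ hθ).ne' (measure_ne_top _ _)

lemma isProbabilityMeasure_gaussianMixture (μ : Fin K → EuclideanSpace ℝ (Fin d))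
    (σ : Fin K → ℝ) {w : Fin K → ℝ} (hw : ∀ k, 0 ≤ w k) (hwsum : ∑ k, w k = 1) :
    IsProbabilityMeasure (gaussianMixture d K μ σ w) := by
  constructor
  simp only [gaussianMixture, Measure.finsetSum_apply, Measure.smul_apply, measure_univ,
    smul_eq_mul, mul_one]
  rw [← ENNReal.ofReal_sum_of_nonneg fun k _ => hw k, hwsum, ENNReal.ofReal_one]

lemma mul_sphericalGaussian_le_gaussianMixture (μ : Fin K → EuclideanSpace ℝ (Fin d))
    (σ : Fin K → ℝ) {w : Fin K → ℝ} (hw : ∀ k, 0 ≤ w k) (m : Fin K)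
    (s : Set (EuclideanSpace ℝ (Fin d))) :
    w m * (sphericalGaussian d (μ m) (σ m)).real s ≤ (gaussianMixture d K μ σ w).real s := by
  have hmix : (gaussianMixture d K μ σ w).real s
      = ∑ k, w k * (sphericalGaussian d (μ k) (σ k)).real s := by
    simp [gaussianMixture, Measure.real, ENNReal.toReal_sum, ENNReal.mul_ne_top, hw]
  rw [hmix]
  exact Finset.single_le_sum (f := fun k => w k * (sphericalGaussian d (μ k) (σ k)).real s)
    (fun k _ => mul_nonneg (hw k) measureReal_nonneg) (Finset.mem_univ m)

lemma mul_chiSquaredCDF_le_gaussianMixture_closedBall (μ : Fin K → EuclideanSpace ℝ (Fin d))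
    {σ : Fin K → ℝ} {w : Fin K → ℝ} {θ : ℝ} (hθ : 0 ≤ θ) (hw : ∀ k, 0 ≤ w k) {m : Fin K}
    (hσ : 0 < σ m) :
    w m * chiSquaredCDF θ d ≤ (gaussianMixture d K μ σ w).real (closedBall (μ m) (θ * σ m)) := by
  rw [← sphericalGaussian_closedBall (μ m) hθ hσ]
  exact mul_sphericalGaussian_le_gaussianMixture μ σ hw m _

theorem simultaneous_recovery_general
    (d K : ℕ) {θ : ℝ} (hθ : 0 < θ) (μ : Fin K → EuclideanSpace ℝ (Fin d))
    (σ : Fin K → ℝ) (hσ : ∀ k, 0 < σ k)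
    (w : Fin K → ℝ) (hw : ∀ k, 0 < w k) (hwsum : ∑ k, w k = 1)
    (σmax wmin : ℝ) (hσmax : IsGreatest (Set.range σ) σmax)
    (hwmin : IsLeast (Set.range w) wmin)
    (hsep : ∀ m m' : Fin K, m ≠ m' →
      8 * θ * σmax / (chiSquaredCDF θ d * wmin) < ‖μ m - μ m'‖) :
    ∃ lam : ℕ → ℝ, (∀ n : ℕ, 0 < lam n) ∧
      ∃ c : ℝ, 0 < c ∧ ∃ C : ℝ, ∀ n : ℕ,
        ENNReal.ofReal (1 - C * Real.exp (-c * n)) ≤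
          (Measure.pi fun _ : Fin n => gaussianMixture d K μ σ w)
            {a | ∀ x : Fin n → EuclideanSpace ℝ (Fin d),
              (∀ y : Fin n → EuclideanSpace ℝ (Fin d),
                sonObjective a (lam n) x ≤ sonObjective a (lam n) y) →
              (∀ m : Fin K, ∀ i i' : Fin n,
                ‖a i - μ m‖ ≤ θ * σ m → ‖a i' - μ m‖ ≤ θ * σ m → x i = x i') ∧
              (∀ m m' : Fin K, m ≠ m' → ∀ i i' : Fin n,
                ‖a i - μ m‖ ≤ θ * σ m → ‖a i' - μ m'‖ ≤ θ * σ m' →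
                x i ≠ x i')} := by
  have := isProbabilityMeasure_gaussianMixture μ σ (fun k => (hw k).le) hwsum
  have hF := chiSquaredCDF_pos hθ d
  have hσmax_pos : 0 < σmax := by obtain ⟨⟨k, rfl⟩, -⟩ := hσmax; exact hσ k
  have hwmin_pos : 0 < wmin := by obtain ⟨⟨k, rfl⟩, -⟩ := hwmin; exact hw k
  set p := chiSquaredCDF θ d * wmin
  have hp : 0 < p := by positivity
  have hball : ∀ m, p ≤ (gaussianMixture d K μ σ w).real (closedBall (μ m) (θ * σ m)) := fun m =>
    calc p ≤ chiSquaredCDF θ d * w m := mul_le_mul_of_nonneg_left (hwmin.2 ⟨m, rfl⟩) hF.le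
      _ = w m * chiSquaredCDF θ d := mul_comm _ _
      _ ≤ _ := mul_chiSquaredCDF_le_gaussianMixture_closedBall μ hθ.le (fun k => (hw k).le) (hσ m)
  have hsep' : ∀ m m', m ≠ m' → 8 * (θ * σmax) / p < ‖μ m - μ m'‖ := by
    simpa only [mul_assoc] using hsep
  have hr : ∀ m, θ * σ m ≤ θ * σmax := fun m => by gcongr; exact hσmax.2 ⟨m, rfl⟩
  refine ⟨fun n => 3 * (θ * σmax) / (p * max (n : ℝ) 1), fun n => by positivity, 2 * (p / 3) ^ 2,
    by positivity, K, fun n => ?_⟩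
  simpa only [RecoversBalls, isMinOn_univ_iff, mem_closedBall_iff_norm,
    sonObjective_eq_sumOfNorms, Fintype.card_fin] using
    ofReal_one_sub_le_pi_recoversBalls (ι := Fin n) _ hp (by positivity) hr hball hsep'

end Probability

/-- Simultaneous recovery under a mean-separation bound: with `θ = 2d` and
`c_d = F(2d, d)`, if `min_{m ≠ m′} ‖μ_m − μ_{m′}‖ > 16·d·σ_max/(c_d·w_min)`, then
there is a choice of `λ(n) > 0` so that with probability at least `1 − C·e^{−c·n}`
sum-of-norms clustering puts each `V_m = {i : ‖a_i − μ_m‖ ≤ 2d·σ_m}` inside a single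
cluster, with distinct clusters for distinct components. -/
theorem simultaneous_recovery
    (d K : ℕ) (hd : 1 ≤ d) (μ : Fin K → EuclideanSpace ℝ (Fin d))
    (σ : Fin K → ℝ) (hσ : ∀ k, 0 < σ k)
    (w : Fin K → ℝ) (hw : ∀ k, 0 < w k) (hwsum : ∑ k, w k = 1)
    (σmax wmin : ℝ) (hσmax : IsGreatest (Set.range σ) σmax)
    (hwmin : IsLeast (Set.range w) wmin)
    (hsep : ∀ m m' : Fin K, m ≠ m' →
      16 * (d : ℝ) * σmax / (chiSquaredCDF (2 * d) d * wmin) < ‖μ m - μ m'‖) :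
    ∃ lam : ℕ → ℝ, (∀ n : ℕ, 0 < lam n) ∧
      ∃ c : ℝ, 0 < c ∧ ∃ C : ℝ, ∀ n : ℕ,
        ENNReal.ofReal (1 - C * Real.exp (-c * n)) ≤
          (Measure.pi fun _ : Fin n => gaussianMixture d K μ σ w)
            {a | ∀ x : Fin n → EuclideanSpace ℝ (Fin d),
              (∀ y : Fin n → EuclideanSpace ℝ (Fin d),
                sonObjective a (lam n) x ≤ sonObjective a (lam n) y) →
              (∀ m : Fin K, ∀ i i' : Fin n,
                ‖a i - μ m‖ ≤ 2 * d * σ m → ‖a i' - μ m‖ ≤ 2 * d * σ m → x i = x i') ∧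
              (∀ m m' : Fin K, m ≠ m' → ∀ i i' : Fin n,
                ‖a i - μ m‖ ≤ 2 * d * σ m → ‖a i' - μ m'‖ ≤ 2 * d * σ m' →
                x i ≠ x i')} := by
  have : (0 : ℝ) < d := by exact_mod_cast hd
  refine simultaneous_recovery_general d K (by positivity) μ σ hσ w hw hwsum σmax wmin hσmax hwmin
    fun m m' hmm' => ?_
  convert hsep m m' hmm' using 2
  ring
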